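/- Noninterference for FG: Suppose ℓi ⋢ ℓ in the security lattice, x : A^{ℓi} ⊢_pc e : bool^{ℓ} is derivable in FG for some pc-label pc, and v1, v2 are closed FG values of type A^{ℓi}. If both e[v1/x] and e[v2/x], evaluated under FG's big-step semantics from the empty heap, terminate, then they produce the same boolean value. -/

import Mathlib

/-!
Noninterference holds because two runs of `e` on different secrets can be kept in a syntactic
indistinguishability relation. Fix the observer's level `o`. The relation `Rel` on pairs of
expressions follows the FG typing rules on both sides simultaneously, with two extra rules: any two
well-typed closed values are related at a type whose label is not below `o`, and two locations are
related when they were allocated in lockstep. Worlds record the store typings of both heaps and the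
partial bijection of lockstep locations; heaps are related when both are well typed and their
contents at corresponding locations are related.

The theorem `fundamental` shows, by induction on the first evaluation, that terminating runs of
related expressions from related heaps end in related heaps and values. As long as the values
eliminated are related structurally, both runs take the same step. When a function or a sum is
related only through its secret label, the continuations may differ, but the typing rules put them
at a pc-label that is not below `o` and give the result a label that is not below `o`. By
`preservation` (type preservation and confinement for a single run) such continuations write only
to locations whose contents are secret, so the heaps remain related (`HeapRel.high_step`), and the
two results are related because their type is secret.

At type `bool` with label `o` the secret-value rule cannot apply, so related values are equal.

The same inductive definition serves for one run and for two: typing of a single expression under a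
store typing is `Rel` of the expression with itself for the interpretation `un`.
-/

/-! ## Shared expression syntax for the FG and CG calculi (de Bruijn indices) -/

inductive Exp : Type where
  | var (n : ℕ)
  | lam (e : Exp)
  | app (e1 e2 : Exp)
  | pair (e1 e2 : Exp)
  | fst (e : Exp)
  | snd (e : Exp)
  | inl (e : Exp)
  | inr (e : Exp)
  | case (e e1 e2 : Exp)      -- the two branches each bind one variable
  | tt
  | ff
  | unit
  | loc (n : ℕ)
  | new (e : Exp)
  | deref (e : Exp)
  | assign (e1 e2 : Exp)
  | label (e : Exp)
  | unlabel (e : Exp)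
  | toLabeled (e : Exp)
  | ret (e : Exp)
  | bind (e1 e2 : Exp)        -- e2 binds one variable
deriving DecidableEq

namespace Exp

/-- Shift free de Bruijn indices `≥ c` up by one. -/
def shift (c : ℕ) : Exp → Exp
  | var n => if n < c then var n else var (n + 1)
  | lam e => lam (e.shift (c + 1))
  | app e1 e2 => app (e1.shift c) (e2.shift c)
  | pair e1 e2 => pair (e1.shift c) (e2.shift c)
  | fst e => fst (e.shift c)
  | snd e => snd (e.shift c)
  | inl e => inl (e.shift c)
  | inr e => inr (e.shift c)
  | case e e1 e2 => case (e.shift c) (e1.shift (c + 1)) (e2.shift (c + 1))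
  | tt => tt
  | ff => ff
  | unit => unit
  | loc n => loc n
  | new e => new (e.shift c)
  | deref e => deref (e.shift c)
  | assign e1 e2 => assign (e1.shift c) (e2.shift c)
  | label e => label (e.shift c)
  | unlabel e => unlabel (e.shift c)
  | toLabeled e => toLabeled (e.shift c)
  | ret e => ret (e.shift c)
  | bind e1 e2 => bind (e1.shift c) (e2.shift (c + 1))

/-- Substitution `e[v/k]` of `v` for de Bruijn index `k` in `e`. -/
def subst : Exp → Exp → ℕ → Exp
  | var n, v, k => if n = k then v else if k < n then var (n - 1) else var n
  | lam e, v, k => lam (e.subst (v.shift 0) (k + 1))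
  | app e1 e2, v, k => app (e1.subst v k) (e2.subst v k)
  | pair e1 e2, v, k => pair (e1.subst v k) (e2.subst v k)
  | fst e, v, k => fst (e.subst v k)
  | snd e, v, k => snd (e.subst v k)
  | inl e, v, k => inl (e.subst v k)
  | inr e, v, k => inr (e.subst v k)
  | case e e1 e2, v, k =>
      case (e.subst v k) (e1.subst (v.shift 0) (k + 1)) (e2.subst (v.shift 0) (k + 1))
  | tt, _, _ => tt
  | ff, _, _ => ff
  | unit, _, _ => unit
  | loc n, _, _ => loc n
  | new e, v, k => new (e.subst v k)
  | deref e, v, k => deref (e.subst v k)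
  | assign e1 e2, v, k => assign (e1.subst v k) (e2.subst v k)
  | label e, v, k => label (e.subst v k)
  | unlabel e, v, k => unlabel (e.subst v k)
  | toLabeled e, v, k => toLabeled (e.subst v k)
  | ret e, v, k => ret (e.subst v k)
  | bind e1 e2, v, k => bind (e1.subst v k) (e2.subst (v.shift 0) (k + 1))

end Exp

/-- Heaps: locations are list indices; allocation appends. -/
abbrev Heap := List Exp

/-! ## Values -/

/-- Values of the FG language. -/
inductive FGVal : Exp → Prop where
  | lam : FGVal (.lam e)
  | pair : FGVal v1 → FGVal v2 → FGVal (.pair v1 v2)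
  | inl : FGVal v → FGVal (.inl v)
  | inr : FGVal v → FGVal (.inr v)
  | tt : FGVal .tt
  | ff : FGVal .ff
  | unit : FGVal .unit
  | loc : FGVal (.loc n)

/-- Values of the CG language (monadic expressions are suspended computations,
hence values; labeled values are values). -/
inductive CGVal : Exp → Prop where
  | lam : CGVal (.lam e)
  | pair : CGVal v1 → CGVal v2 → CGVal (.pair v1 v2)
  | inl : CGVal v → CGVal (.inl v)
  | inr : CGVal v → CGVal (.inr v)
  | tt : CGVal .tt
  | ff : CGVal .ff
  | unit : CGVal .unit
  | loc : CGVal (.loc n)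
  | label : CGVal v → CGVal (.label v)
  | ret : CGVal (.ret e)
  | bind : CGVal (.bind e1 e2)
  | unlabel : CGVal (.unlabel e)
  | toLabeled : CGVal (.toLabeled e)
  | new : CGVal (.new e)
  | deref : CGVal (.deref e)
  | assign : CGVal (.assign e1 e2)

/-! ## FG: deterministic big-step call-by-value evaluation over heaps -/

inductive FGEval : Heap → Exp → Heap → Exp → Prop where
  | lam : FGEval h (.lam e) h (.lam e)
  | tt : FGEval h .tt h .tt
  | ff : FGEval h .ff h .ff
  | unit : FGEval h .unit h .unit
  | loc : FGEval h (.loc n) h (.loc n)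
  | app : FGEval h e1 h1 (.lam e) → FGEval h1 e2 h2 v2 →
      FGEval h2 (e.subst v2 0) h3 v → FGEval h (.app e1 e2) h3 v
  | pair : FGEval h e1 h1 v1 → FGEval h1 e2 h2 v2 →
      FGEval h (.pair e1 e2) h2 (.pair v1 v2)
  | fst : FGEval h e h1 (.pair v1 v2) → FGEval h (.fst e) h1 v1
  | snd : FGEval h e h1 (.pair v1 v2) → FGEval h (.snd e) h1 v2
  | inl : FGEval h e h1 v → FGEval h (.inl e) h1 (.inl v)
  | inr : FGEval h e h1 v → FGEval h (.inr e) h1 (.inr v)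
  | caseL : FGEval h e h1 (.inl v) → FGEval h1 (e1.subst v 0) h2 w →
      FGEval h (.case e e1 e2) h2 w
  | caseR : FGEval h e h1 (.inr v) → FGEval h1 (e2.subst v 0) h2 w →
      FGEval h (.case e e1 e2) h2 w
  | new : FGEval h e h1 v → FGEval h (.new e) (h1 ++ [v]) (.loc h1.length)
  | deref : FGEval h e h1 (.loc n) → h1[n]? = some v → FGEval h (.deref e) h1 v
  | assign : FGEval h e1 h1 (.loc n) → FGEval h1 e2 h2 v →
      FGEval h (.assign e1 e2) (h2.set n v) .unit

/-! ## CG: pure big-step evaluation (no heap) and forcing semantics over heaps -/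

/-- Pure (heap-free) big-step evaluation for CG.  Monadic expressions are
suspended computations and evaluate to themselves. -/
inductive CGPure : Exp → Exp → Prop where
  | lam : CGPure (.lam e) (.lam e)
  | tt : CGPure .tt .tt
  | ff : CGPure .ff .ff
  | unit : CGPure .unit .unit
  | loc : CGPure (.loc n) (.loc n)
  | app : CGPure e1 (.lam e) → CGPure e2 v2 → CGPure (e.subst v2 0) v →
      CGPure (.app e1 e2) v
  | pair : CGPure e1 v1 → CGPure e2 v2 → CGPure (.pair e1 e2) (.pair v1 v2)
  | fst : CGPure e (.pair v1 v2) → CGPure (.fst e) v1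
  | snd : CGPure e (.pair v1 v2) → CGPure (.snd e) v2
  | inl : CGPure e v → CGPure (.inl e) (.inl v)
  | inr : CGPure e v → CGPure (.inr e) (.inr v)
  | caseL : CGPure e (.inl v) → CGPure (e1.subst v 0) w → CGPure (.case e e1 e2) w
  | caseR : CGPure e (.inr v) → CGPure (e2.subst v 0) w → CGPure (.case e e1 e2) w
  | label : CGPure e v → CGPure (.label e) (.label v)
  | ret : CGPure (.ret e) (.ret e)
  | bind : CGPure (.bind e1 e2) (.bind e1 e2)
  | unlabel : CGPure (.unlabel e) (.unlabel e)
  | toLabeled : CGPure (.toLabeled e) (.toLabeled e)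
  | new : CGPure (.new e) (.new e)
  | deref : CGPure (.deref e) (.deref e)
  | assign : CGPure (.assign e1 e2) (.assign e1 e2)

/-- Forcing semantics for CG's monadic computations: actually performs heap
reads, writes and allocations. -/
inductive CGForce : Heap → Exp → Heap → Exp → Prop where
  | ret : CGPure e (.ret e0) → CGPure e0 v → CGForce h e h v
  | bind : CGPure e (.bind e1 e2) → CGForce h e1 h1 v1 →
      CGForce h1 (e2.subst v1 0) h2 v → CGForce h e h2 v
  | unlabel : CGPure e (.unlabel e0) → CGPure e0 (.label v) → CGForce h e h v
  | toLabeled : CGPure e (.toLabeled e0) → CGForce h e0 h1 v →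
      CGForce h e h1 (.label v)
  | new : CGPure e (.new e0) → CGPure e0 v → CGForce h e (h ++ [v]) (.loc h.length)
  | deref : CGPure e (.deref e0) → CGPure e0 (.loc n) → h[n]? = some v →
      CGForce h e h v
  | assign : CGPure e (.assign e1 e2) → CGPure e1 (.loc n) → CGPure e2 v →
      CGForce h e (h.set n v) .unit

/-! ## FG types (every type constructor carries its outer security label) -/

inductive FGTy (L : Type) : Type where
  | bool (l : L)
  | unit (l : L)
  | fn (t1 : FGTy L) (le : L) (t2 : FGTy L) (l : L)
  | prod (t1 t2 : FGTy L) (l : L)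
  | sum (t1 t2 : FGTy L) (l : L)
  | ref (t : FGTy L) (l : L)

/-- The outer label of an FG type (`(A^ℓ).lab = ℓ`).
`τ.lab ≥ ℓ` is the protection judgment `τ ↘ ℓ`. -/
def FGTy.lab {L : Type} : FGTy L → L
  | .bool l => l
  | .unit l => l
  | .fn _ _ _ l => l
  | .prod _ _ l => l
  | .sum _ _ l => l
  | .ref _ l => l

/-- FG subtyping: structural, covariant in security labels, contravariant in
the pc-label of function types, invariant in the content type of references. -/
inductive FGSub {L : Type} [Lattice L] [BoundedOrder L] : FGTy L → FGTy L → Prop where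
  | bool : l ≤ l' → FGSub (.bool l) (.bool l')
  | unit : l ≤ l' → FGSub (.unit l) (.unit l')
  | fn : FGSub τ1' τ1 → le' ≤ le → FGSub τ2 τ2' → l ≤ l' →
      FGSub (.fn τ1 le τ2 l) (.fn τ1' le' τ2' l')
  | prod : FGSub τ1 τ1' → FGSub τ2 τ2' → l ≤ l' →
      FGSub (.prod τ1 τ2 l) (.prod τ1' τ2' l')
  | sum : FGSub τ1 τ1' → FGSub τ2 τ2' → l ≤ l' →
      FGSub (.sum τ1 τ2 l) (.sum τ1' τ2' l')
  | ref : l ≤ l' → FGSub (.ref τ l) (.ref τ l')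

/-- The FG typing judgment `Γ ⊢_pc e : τ`. -/
inductive FGTyped {L : Type} [Lattice L] [BoundedOrder L] :
    List (FGTy L) → L → Exp → FGTy L → Prop where
  | var : Γ[n]? = some τ → FGTyped Γ pc (.var n) τ
  | tt : FGTyped Γ pc .tt (.bool ⊥)
  | ff : FGTyped Γ pc .ff (.bool ⊥)
  | unit : FGTyped Γ pc .unit (.unit ⊥)
  | lam : FGTyped (τ1 :: Γ) le e τ2 → FGTyped Γ pc (.lam e) (.fn τ1 le τ2 ⊥)
  | app : FGTyped Γ pc e1 (.fn τ1 le τ2 l) → FGTyped Γ pc e2 τ1 →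
      l ⊔ pc ≤ le → l ≤ τ2.lab → FGTyped Γ pc (.app e1 e2) τ2
  | pair : FGTyped Γ pc e1 τ1 → FGTyped Γ pc e2 τ2 →
      FGTyped Γ pc (.pair e1 e2) (.prod τ1 τ2 ⊥)
  | fst : FGTyped Γ pc e (.prod τ1 τ2 l) → l ≤ τ1.lab → FGTyped Γ pc (.fst e) τ1
  | snd : FGTyped Γ pc e (.prod τ1 τ2 l) → l ≤ τ2.lab → FGTyped Γ pc (.snd e) τ2
  | inl : FGTyped Γ pc e τ1 → FGTyped Γ pc (.inl e) (.sum τ1 τ2 ⊥)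
  | inr : FGTyped Γ pc e τ2 → FGTyped Γ pc (.inr e) (.sum τ1 τ2 ⊥)
  | case : FGTyped Γ pc e (.sum τ1 τ2 l) → FGTyped (τ1 :: Γ) (pc ⊔ l) e1 τ →
      FGTyped (τ2 :: Γ) (pc ⊔ l) e2 τ → l ≤ τ.lab →
      FGTyped Γ pc (.case e e1 e2) τ
  | new : FGTyped Γ pc e τ → pc ≤ τ.lab → FGTyped Γ pc (.new e) (.ref τ ⊥)
  | deref : FGTyped Γ pc e (.ref τ l) → FGSub τ τ' → l ≤ τ'.lab →
      FGTyped Γ pc (.deref e) τ'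
  | assign : FGTyped Γ pc e1 (.ref τ l) → FGTyped Γ pc e2 τ →
      pc ⊔ l ≤ τ.lab → FGTyped Γ pc (.assign e1 e2) (.unit ⊥)
  | sub : FGTyped Γ pc' e τ' → FGSub τ' τ → pc ≤ pc' → FGTyped Γ pc e τ

/-! ## CG types -/

inductive CGTy (L : Type) : Type where
  | bool
  | unit
  | fn (t1 t2 : CGTy L)
  | prod (t1 t2 : CGTy L)
  | sum (t1 t2 : CGTy L)
  | ref (l : L) (t : CGTy L)
  | labeled (l : L) (t : CGTy L)
  | monad (l1 l2 : L) (t : CGTy L)   -- CG ℓ1 ℓ2 τ : pc-label ℓ1, taint label ℓ2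

/-- CG subtyping: `Labeled ℓ τ` covariant in `ℓ` and `τ`; `CG ℓ1 ℓ2 τ`
contravariant in `ℓ1`, covariant in `ℓ2` and `τ`. -/
inductive CGSub {L : Type} [Lattice L] [BoundedOrder L] : CGTy L → CGTy L → Prop where
  | bool : CGSub .bool .bool
  | unit : CGSub .unit .unit
  | fn : CGSub τ1' τ1 → CGSub τ2 τ2' → CGSub (.fn τ1 τ2) (.fn τ1' τ2')
  | prod : CGSub τ1 τ1' → CGSub τ2 τ2' → CGSub (.prod τ1 τ2) (.prod τ1' τ2')
  | sum : CGSub τ1 τ1' → CGSub τ2 τ2' → CGSub (.sum τ1 τ2) (.sum τ1' τ2')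
  | ref : CGSub (.ref l τ) (.ref l τ)
  | labeled : CGSub τ τ' → l ≤ l' → CGSub (.labeled l τ) (.labeled l' τ')
  | monad : l1' ≤ l1 → l2 ≤ l2' → CGSub τ τ' →
      CGSub (.monad l1 l2 τ) (.monad l1' l2' τ')

/-- The CG typing judgment `Γ ⊢ e : τ`. -/
inductive CGTyped {L : Type} [Lattice L] [BoundedOrder L] :
    List (CGTy L) → Exp → CGTy L → Prop where
  | var : Γ[n]? = some τ → CGTyped Γ (.var n) τ
  | tt : CGTyped Γ .tt .bool
  | ff : CGTyped Γ .ff .bool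
  | unit : CGTyped Γ .unit .unit
  | lam : CGTyped (τ1 :: Γ) e τ2 → CGTyped Γ (.lam e) (.fn τ1 τ2)
  | app : CGTyped Γ e1 (.fn τ1 τ2) → CGTyped Γ e2 τ1 → CGTyped Γ (.app e1 e2) τ2
  | pair : CGTyped Γ e1 τ1 → CGTyped Γ e2 τ2 → CGTyped Γ (.pair e1 e2) (.prod τ1 τ2)
  | fst : CGTyped Γ e (.prod τ1 τ2) → CGTyped Γ (.fst e) τ1
  | snd : CGTyped Γ e (.prod τ1 τ2) → CGTyped Γ (.snd e) τ2
  | inl : CGTyped Γ e τ1 → CGTyped Γ (.inl e) (.sum τ1 τ2)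
  | inr : CGTyped Γ e τ2 → CGTyped Γ (.inr e) (.sum τ1 τ2)
  | case : CGTyped Γ e (.sum τ1 τ2) → CGTyped (τ1 :: Γ) e1 τ →
      CGTyped (τ2 :: Γ) e2 τ → CGTyped Γ (.case e e1 e2) τ
  | ret : CGTyped Γ e τ → CGTyped Γ (.ret e) (.monad ⊤ ⊥ τ)
  | bind : CGTyped Γ e1 (.monad l1 l2 τ) → CGTyped (τ :: Γ) e2 (.monad l3 l4 τ') →
      l ≤ l1 → l ≤ l3 → l2 ≤ l3 → l2 ≤ l4 →
      CGTyped Γ (.bind e1 e2) (.monad l l4 τ')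
  | label : CGTyped Γ e τ → CGTyped Γ (.label e) (.labeled l τ)
  | unlabel : CGTyped Γ e (.labeled l τ) → CGTyped Γ (.unlabel e) (.monad ⊤ l τ)
  | new : CGTyped Γ e (.labeled l τ) → CGTyped Γ (.new e) (.monad l ⊥ (.ref l τ))
  | deref : CGTyped Γ e (.ref l' τ) → CGTyped Γ (.deref e) (.monad ⊤ ⊥ (.labeled l' τ))
  | assign : CGTyped Γ e1 (.ref l τ) → CGTyped Γ e2 (.labeled l τ) →
      CGTyped Γ (.assign e1 e2) (.monad l ⊥ .unit)
  | toLabeled : CGTyped Γ e (.monad l l' τ) →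
      CGTyped Γ (.toLabeled e) (.monad l ⊥ (.labeled l' τ))
  | sub : CGTyped Γ e τ' → CGSub τ' τ → CGTyped Γ e τ

/-! ## The CG-to-FG type translation ⟦·⟧ -/

def toFG {L : Type} [Lattice L] [BoundedOrder L] : CGTy L → FGTy L
  | .bool => .bool ⊥
  | .unit => .unit ⊥
  | .fn τ1 τ2 => .fn (toFG τ1) ⊤ (toFG τ2) ⊥
  | .prod τ1 τ2 => .prod (toFG τ1) (toFG τ2) ⊥
  | .sum τ1 τ2 => .sum (toFG τ1) (toFG τ2) ⊥
  | .ref l τ => .ref (.sum (toFG τ) (.unit ⊥) l) ⊥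
  | .labeled l τ => .sum (toFG τ) (.unit ⊥) l
  | .monad l1 l2 τ => .fn (.unit ⊥) l1 (.sum (toFG τ) (.unit ⊥) l2) ⊥

/-! ## The FG-to-CG type translation: ⟦A^ℓ⟧ = Labeled ℓ ⟨A⟩ -/

/-- `⟨A⟩`: translation of the unlabeled part of an FG type. -/
def trA {L : Type} [Lattice L] [BoundedOrder L] : FGTy L → CGTy L
  | .bool _ => .bool
  | .unit _ => .unit
  | .fn τ1 le τ2 _ =>
      .fn (.labeled τ1.lab (trA τ1)) (.monad le ⊥ (.labeled τ2.lab (trA τ2)))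
  | .prod τ1 τ2 _ => .prod (.labeled τ1.lab (trA τ1)) (.labeled τ2.lab (trA τ2))
  | .sum τ1 τ2 _ => .sum (.labeled τ1.lab (trA τ1)) (.labeled τ2.lab (trA τ2))
  | .ref τ _ => .ref τ.lab (trA τ)

/-- `⟦A^ℓ⟧ = Labeled ℓ ⟨A⟩`. -/
def toCG {L : Type} [Lattice L] [BoundedOrder L] (τ : FGTy L) : CGTy L :=
  .labeled τ.lab (trA τ)

/-! ## CG-to-FG expression translation `Γ ⊢ e : τ ⇝ e_F` -/

inductive CG2FG {L : Type} [Lattice L] [BoundedOrder L] :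
    List (CGTy L) → Exp → CGTy L → Exp → Prop where
  | var : Γ[n]? = some τ → CG2FG Γ (.var n) τ (.var n)
  | tt : CG2FG Γ .tt .bool .tt
  | ff : CG2FG Γ .ff .bool .ff
  | unit : CG2FG Γ .unit .unit .unit
  | lam : CG2FG (τ1 :: Γ) e τ2 eF → CG2FG Γ (.lam e) (.fn τ1 τ2) (.lam eF)
  | app : CG2FG Γ e1 (.fn τ1 τ2) eF1 → CG2FG Γ e2 τ1 eF2 →
      CG2FG Γ (.app e1 e2) τ2 (.app eF1 eF2)
  | pair : CG2FG Γ e1 τ1 eF1 → CG2FG Γ e2 τ2 eF2 →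
      CG2FG Γ (.pair e1 e2) (.prod τ1 τ2) (.pair eF1 eF2)
  | fst : CG2FG Γ e (.prod τ1 τ2) eF → CG2FG Γ (.fst e) τ1 (.fst eF)
  | snd : CG2FG Γ e (.prod τ1 τ2) eF → CG2FG Γ (.snd e) τ2 (.snd eF)
  | inl : CG2FG Γ e τ1 eF → CG2FG Γ (.inl e) (.sum τ1 τ2) (.inl eF)
  | inr : CG2FG Γ e τ2 eF → CG2FG Γ (.inr e) (.sum τ1 τ2) (.inr eF)
  | case : CG2FG Γ e (.sum τ1 τ2) eF → CG2FG (τ1 :: Γ) e1 τ eF1 →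
      CG2FG (τ2 :: Γ) e2 τ eF2 → CG2FG Γ (.case e e1 e2) τ (.case eF eF1 eF2)
  | label : CG2FG Γ e τ eF → CG2FG Γ (.label e) (.labeled l τ) (.inl eF)
  | unlabel : CG2FG Γ e (.labeled l τ) eF →
      CG2FG Γ (.unlabel e) (.monad ⊤ l τ) (.lam (eF.shift 0))
  | toLabeled : CG2FG Γ e (.monad l1 l2 τ) eF →
      CG2FG Γ (.toLabeled e) (.monad l1 ⊥ (.labeled l2 τ))
        (.lam (.inl (.app (eF.shift 0) .unit)))
  | ret : CG2FG Γ e τ eF → CG2FG Γ (.ret e) (.monad ⊤ ⊥ τ) (.lam (.inl (eF.shift 0)))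
  | bind : CG2FG Γ e1 (.monad l1 l2 τ) eF1 →
      CG2FG (τ :: Γ) e2 (.monad l3 l4 τ') eF2 →
      l ≤ l1 → l ≤ l3 → l2 ≤ l3 → l2 ≤ l4 →
      CG2FG Γ (.bind e1 e2) (.monad l l4 τ')
        (.lam (.case (.app (eF1.shift 0) .unit) (.app (eF2.shift 1) .unit)
          (.inr .unit)))
  | new : CG2FG Γ e (.labeled l τ) eF →
      CG2FG Γ (.new e) (.monad l ⊥ (.ref l τ)) (.lam (.inl (.new (eF.shift 0))))
  | deref : CG2FG Γ e (.ref l' τ) eF →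
      CG2FG Γ (.deref e) (.monad ⊤ ⊥ (.labeled l' τ))
        (.lam (.inl (.deref (eF.shift 0))))
  | assign : CG2FG Γ e1 (.ref l τ) eF1 → CG2FG Γ e2 (.labeled l τ) eF2 →
      CG2FG Γ (.assign e1 e2) (.monad l ⊥ .unit)
        (.lam (.inl (.assign (eF1.shift 0) (eF2.shift 0))))
  | sub : CG2FG Γ e τ' eF → CGSub τ' τ → CG2FG Γ e τ eF

/-! ## FG-to-CG expression translation `Γ ⊢_pc e : τ ⇝ e_c` -/

/-- `coerce_taint ≜ λx. toLabeled(bind(x, y. unlabel y))`. -/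
def coerceTaint : Exp := .lam (.toLabeled (.bind (.var 0) (.unlabel (.var 0))))

inductive FG2CG {L : Type} [Lattice L] [BoundedOrder L] :
    List (FGTy L) → L → Exp → FGTy L → Exp → Prop where
  | var : Γ[n]? = some τ → FG2CG Γ pc (.var n) τ (.ret (.var n))
  | tt : FG2CG Γ pc .tt (.bool ⊥) (.ret (.label .tt))
  | ff : FG2CG Γ pc .ff (.bool ⊥) (.ret (.label .ff))
  | unit : FG2CG Γ pc .unit (.unit ⊥) (.ret (.label .unit))
  | lam : FG2CG (τ1 :: Γ) le e τ2 ec →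
      FG2CG Γ pc (.lam e) (.fn τ1 le τ2 ⊥) (.ret (.label (.lam ec)))
  | app : FG2CG Γ pc e1 (.fn τ1 le τ2 l) ec1 → FG2CG Γ pc e2 τ1 ec2 →
      l ⊔ pc ≤ le → l ≤ τ2.lab →
      FG2CG Γ pc (.app e1 e2) τ2
        (.app coerceTaint
          (.bind ec1 (.bind (ec2.shift 0)
            (.bind (.unlabel (.var 1)) (.app (.var 0) (.var 1))))))
  | pair : FG2CG Γ pc e1 τ1 ec1 → FG2CG Γ pc e2 τ2 ec2 →
      FG2CG Γ pc (.pair e1 e2) (.prod τ1 τ2 ⊥)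
        (.bind ec1 (.bind (ec2.shift 0) (.ret (.label (.pair (.var 1) (.var 0))))))
  | fst : FG2CG Γ pc e (.prod τ1 τ2 l) ec → l ≤ τ1.lab →
      FG2CG Γ pc (.fst e) τ1
        (.app coerceTaint
          (.bind ec (.bind (.unlabel (.var 0)) (.ret (.fst (.var 0))))))
  | snd : FG2CG Γ pc e (.prod τ1 τ2 l) ec → l ≤ τ2.lab →
      FG2CG Γ pc (.snd e) τ2
        (.app coerceTaint
          (.bind ec (.bind (.unlabel (.var 0)) (.ret (.snd (.var 0))))))
  | inl : FG2CG Γ pc e τ1 ec →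
      FG2CG Γ pc (.inl e) (.sum τ1 τ2 ⊥) (.bind ec (.ret (.label (.inl (.var 0)))))
  | inr : FG2CG Γ pc e τ2 ec →
      FG2CG Γ pc (.inr e) (.sum τ1 τ2 ⊥) (.bind ec (.ret (.label (.inr (.var 0)))))
  | case : FG2CG Γ pc e (.sum τ1 τ2 l) ec →
      FG2CG (τ1 :: Γ) (pc ⊔ l) e1 τ ec1 → FG2CG (τ2 :: Γ) (pc ⊔ l) e2 τ ec2 →
      l ≤ τ.lab →
      FG2CG Γ pc (.case e e1 e2) τ
        (.app coerceTaint
          (.bind ec (.bind (.unlabel (.var 0))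
            (.case (.var 0) ((ec1.shift 1).shift 1) ((ec2.shift 1).shift 1)))))
  | new : FG2CG Γ pc e τ ec → pc ≤ τ.lab →
      FG2CG Γ pc (.new e) (.ref τ ⊥)
        (.bind ec (.bind (.new (.var 0)) (.ret (.label (.var 0)))))
  | deref : FG2CG Γ pc e (.ref τ l) ec → FGSub τ τ' → l ≤ τ'.lab →
      FG2CG Γ pc (.deref e) τ'
        (.app coerceTaint
          (.bind ec (.bind (.unlabel (.var 0)) (.deref (.var 0)))))
  | assign : FG2CG Γ pc e1 (.ref τ l) ec1 → FG2CG Γ pc e2 τ ec2 →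
      pc ⊔ l ≤ τ.lab →
      FG2CG Γ pc (.assign e1 e2) (.unit ⊥)
        (.bind (.toLabeled (.bind ec1 (.bind (ec2.shift 0)
          (.bind (.unlabel (.var 1)) (.assign (.var 0) (.var 1))))))
          (.ret (.label .unit)))
  | sub : FG2CG Γ pc' e τ' ec → FGSub τ' τ → pc ≤ pc' → FG2CG Γ pc e τ ec

namespace FGNI

set_option linter.unusedSectionVars false

variable {L : Type} [Lattice L] [BoundedOrder L]

/-! ### Subtyping -/

theorem sub_refl : ∀ τ : FGTy L, FGSub τ τ
  | .bool _ => .bool le_rfl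
  | .unit _ => .unit le_rfl
  | .fn a _ b _ => .fn (sub_refl a) le_rfl (sub_refl b) le_rfl
  | .prod a b _ => .prod (sub_refl a) (sub_refl b) le_rfl
  | .sum a b _ => .sum (sub_refl a) (sub_refl b) le_rfl
  | .ref _ _ => .ref le_rfl

/-- Transitivity, proved in both directions at once so that the contravariant argument position
of function types is covered by the induction. -/
theorem sub_trans_aux {b c : FGTy L} (h : FGSub b c) :
    (∀ a, FGSub a b → FGSub a c) ∧ (∀ d, FGSub c d → FGSub b d) := by
  induction h with
  | bool h => exact ⟨fun _ k => by cases k with | bool k => exact .bool (k.trans h),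
      fun _ k => by cases k with | bool k => exact .bool (h.trans k)⟩
  | unit h => exact ⟨fun _ k => by cases k with | unit k => exact .unit (k.trans h),
      fun _ k => by cases k with | unit k => exact .unit (h.trans k)⟩
  | fn _ h1 _ h2 ih1 ih2 =>
    exact ⟨fun _ k => by
        cases k with | fn k1 k2 k3 k4 => exact .fn (ih1.2 _ k1) (h1.trans k2) (ih2.1 _ k3) (k4.trans h2),
      fun _ k => by
        cases k with | fn k1 k2 k3 k4 => exact .fn (ih1.1 _ k1) (k2.trans h1) (ih2.2 _ k3) (h2.trans k4)⟩
  | prod _ _ h ih1 ih2 =>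
    exact ⟨fun _ k => by
        cases k with | prod k1 k2 k3 => exact .prod (ih1.1 _ k1) (ih2.1 _ k2) (k3.trans h),
      fun _ k => by
        cases k with | prod k1 k2 k3 => exact .prod (ih1.2 _ k1) (ih2.2 _ k2) (h.trans k3)⟩
  | sum _ _ h ih1 ih2 =>
    exact ⟨fun _ k => by
        cases k with | sum k1 k2 k3 => exact .sum (ih1.1 _ k1) (ih2.1 _ k2) (k3.trans h),
      fun _ k => by
        cases k with | sum k1 k2 k3 => exact .sum (ih1.2 _ k1) (ih2.2 _ k2) (h.trans k3)⟩
  | ref h => exact ⟨fun _ k => by cases k with | ref k => exact .ref (k.trans h),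
      fun _ k => by cases k with | ref k => exact .ref (h.trans k)⟩

theorem sub_trans {a b c : FGTy L} (h : FGSub a b) (k : FGSub b c) : FGSub a c :=
  (sub_trans_aux k).1 _ h

theorem sub_lab {a b : FGTy L} (h : FGSub a b) : a.lab ≤ b.lab := by
  cases h <;> assumption

/-! ### Relational typing -/

/-- The parameters of relational typing: which pairs of locations are related at which content
type, and which pairs of closed values are related outright. -/
structure Interp (L : Type) where
  /-- Related locations, with the type of their contents. -/
  loc : ℕ → ℕ → FGTy L → Prop
  /-- Pairs of closed values related without comparing their structure. -/
  hi : Exp → Exp → FGTy L → Prop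

/-- Relational typing `Γ ⊢_pc e ~ e' : τ`: both expressions are built by the same FG typing rules,
except at locations and at values, where the interpretation `I` decides. Subsumption on types is
built into every rule, so that inversion is plain case analysis. -/
inductive Rel (I : Interp L) : List (FGTy L) → L → Exp → Exp → FGTy L → Prop where
  | var : Γ[n]? = some τ0 → FGSub τ0 τ → Rel I Γ pc (.var n) (.var n) τ
  | loc : I.loc n n' τ0 → FGSub (.ref τ0 ⊥) τ → Rel I Γ pc (.loc n) (.loc n') τ
  | hi : I.hi v v' τ0 → FGSub τ0 τ → Rel I Γ pc v v' τ
  | tt : FGSub (.bool ⊥) τ → Rel I Γ pc .tt .tt τ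
  | ff : FGSub (.bool ⊥) τ → Rel I Γ pc .ff .ff τ
  | unit : FGSub (.unit ⊥) τ → Rel I Γ pc .unit .unit τ
  | lam : Rel I (τ1 :: Γ) le e e' τ2 → FGSub (.fn τ1 le τ2 ⊥) τ → Rel I Γ pc (.lam e) (.lam e') τ
  | app : Rel I Γ pc e1 e1' (.fn τ1 le τ2 l) → Rel I Γ pc e2 e2' τ1 →
      l ⊔ pc ≤ le → l ≤ τ2.lab → FGSub τ2 τ → Rel I Γ pc (.app e1 e2) (.app e1' e2') τ
  | pair : Rel I Γ pc e1 e1' τ1 → Rel I Γ pc e2 e2' τ2 → FGSub (.prod τ1 τ2 ⊥) τ →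
      Rel I Γ pc (.pair e1 e2) (.pair e1' e2') τ
  | fst : Rel I Γ pc e e' (.prod τ1 τ2 l) → l ≤ τ1.lab → FGSub τ1 τ →
      Rel I Γ pc (.fst e) (.fst e') τ
  | snd : Rel I Γ pc e e' (.prod τ1 τ2 l) → l ≤ τ2.lab → FGSub τ2 τ →
      Rel I Γ pc (.snd e) (.snd e') τ
  | inl : Rel I Γ pc e e' τ1 → FGSub (.sum τ1 τ2 ⊥) τ → Rel I Γ pc (.inl e) (.inl e') τ
  | inr : Rel I Γ pc e e' τ2 → FGSub (.sum τ1 τ2 ⊥) τ → Rel I Γ pc (.inr e) (.inr e') τ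
  | case : Rel I Γ pc e e' (.sum τ1 τ2 l) → Rel I (τ1 :: Γ) (pc ⊔ l) e1 e1' τ0 →
      Rel I (τ2 :: Γ) (pc ⊔ l) e2 e2' τ0 → l ≤ τ0.lab → FGSub τ0 τ →
      Rel I Γ pc (.case e e1 e2) (.case e' e1' e2') τ
  | new : Rel I Γ pc e e' τ0 → pc ≤ τ0.lab → FGSub (.ref τ0 ⊥) τ →
      Rel I Γ pc (.new e) (.new e') τ
  | deref : Rel I Γ pc e e' (.ref τ0 l) → FGSub τ0 τ1 → l ≤ τ1.lab → FGSub τ1 τ →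
      Rel I Γ pc (.deref e) (.deref e') τ
  | assign : Rel I Γ pc e1 e1' (.ref τ0 l) → Rel I Γ pc e2 e2' τ0 →
      pc ⊔ l ≤ τ0.lab → FGSub (.unit ⊥) τ → Rel I Γ pc (.assign e1 e2) (.assign e1' e2') τ

variable {I J : Interp L} {Γ Δ : List (FGTy L)} {pc pc' : L} {e e' v v' : Exp} {τ τ' : FGTy L}

theorem Rel.sub (h : Rel I Γ pc e e' τ) (s : FGSub τ τ') : Rel I Γ pc e e' τ' := by
  cases h with
  | var h k => exact .var h (sub_trans k s)
  | loc h k => exact .loc h (sub_trans k s)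
  | hi h k => exact .hi h (sub_trans k s)
  | tt k => exact .tt (sub_trans k s)
  | ff k => exact .ff (sub_trans k s)
  | unit k => exact .unit (sub_trans k s)
  | lam h k => exact .lam h (sub_trans k s)
  | app h1 h2 h3 h4 k => exact .app h1 h2 h3 h4 (sub_trans k s)
  | pair h1 h2 k => exact .pair h1 h2 (sub_trans k s)
  | fst h1 h2 k => exact .fst h1 h2 (sub_trans k s)
  | snd h1 h2 k => exact .snd h1 h2 (sub_trans k s)
  | inl h k => exact .inl h (sub_trans k s)
  | inr h k => exact .inr h (sub_trans k s)
  | case h1 h2 h3 h4 k => exact .case h1 h2 h3 h4 (sub_trans k s)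
  | new h1 h2 k => exact .new h1 h2 (sub_trans k s)
  | deref h1 h2 h3 k => exact .deref h1 h2 h3 (sub_trans k s)
  | assign h1 h2 h3 k => exact .assign h1 h2 h3 (sub_trans k s)

theorem Rel.anti (h : Rel I Γ pc e e' τ) : ∀ {pc' : L}, pc' ≤ pc → Rel I Γ pc' e e' τ := by
  induction h with
  | var h k => exact fun _ => .var h k
  | loc h k => exact fun _ => .loc h k
  | hi h k => exact fun _ => .hi h k
  | tt k => exact fun _ => .tt k
  | ff k => exact fun _ => .ff k
  | unit k => exact fun _ => .unit k
  | lam h k => exact fun _ => .lam h k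
  | app h1 h2 h3 h4 k i1 i2 =>
    exact fun q => .app (i1 q) (i2 q) ((sup_le_sup_left q _).trans h3) h4 k
  | pair h1 h2 k i1 i2 => exact fun q => .pair (i1 q) (i2 q) k
  | fst h1 h2 k i => exact fun q => .fst (i q) h2 k
  | snd h1 h2 k i => exact fun q => .snd (i q) h2 k
  | inl h k i => exact fun q => .inl (i q) k
  | inr h k i => exact fun q => .inr (i q) k
  | case h1 h2 h3 h4 k i1 i2 i3 =>
    exact fun q => .case (i1 q) (i2 (sup_le_sup_right q _)) (i3 (sup_le_sup_right q _)) h4 k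
  | new h1 h2 k i => exact fun q => .new (i q) (q.trans h2) k
  | deref h1 h2 h3 k i => exact fun q => .deref (i q) h2 h3 k
  | assign h1 h2 h3 k i1 i2 =>
    exact fun q => .assign (i1 q) (i2 q) ((sup_le_sup_right q _).trans h3) k

/-- Values have no effects, so their pc-label is irrelevant. -/
theorem Rel.val_pc (h : Rel I Γ pc v v' τ) : FGVal v → ∀ pc', Rel I Γ pc' v v' τ := by
  induction h with
  | loc h k => exact fun _ _ => .loc h k
  | hi h k => exact fun _ _ => .hi h k
  | tt k => exact fun _ _ => .tt k
  | ff k => exact fun _ _ => .ff k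
  | unit k => exact fun _ _ => .unit k
  | lam h k => exact fun _ _ => .lam h k
  | pair h1 h2 k i1 i2 =>
    intro v q
    cases v with | pair a b => exact .pair (i1 a q) (i2 b q) k
  | inl h k i =>
    intro v q
    cases v with | inl a => exact .inl (i a q) k
  | inr h k i =>
    intro v q
    cases v with | inr a => exact .inr (i a q) k
  | _ => intro v; cases v

theorem Rel.weaken (h : Rel I Γ pc e e' τ) : Rel I (Γ ++ Δ) pc e e' τ := by
  induction h with
  | var h k =>
    refine .var ?_ k
    rw [List.getElem?_append_left (List.getElem?_eq_some_iff.1 h).1]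
    exact h
  | loc h k => exact .loc h k
  | hi h k => exact .hi h k
  | tt k => exact .tt k
  | ff k => exact .ff k
  | unit k => exact .unit k
  | lam h k i => exact .lam i k
  | app h1 h2 h3 h4 k i1 i2 => exact .app i1 i2 h3 h4 k
  | pair h1 h2 k i1 i2 => exact .pair i1 i2 k
  | fst h1 h2 k i => exact .fst i h2 k
  | snd h1 h2 k i => exact .snd i h2 k
  | inl h k i => exact .inl i k
  | inr h k i => exact .inr i k
  | case h1 h2 h3 h4 k i1 i2 i3 => exact .case i1 i2 i3 h4 k
  | new h1 h2 k i => exact .new i h2 k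
  | deref h1 h2 h3 k i => exact .deref i h2 h3 k
  | assign h1 h2 h3 k i1 i2 => exact .assign i1 i2 h3 k

theorem Rel.map (h : Rel I Γ pc e e' τ)
    (hl : ∀ n n' τ, I.loc n n' τ → J.loc n n' τ)
    (hh : ∀ v v' τ, I.hi v v' τ → J.hi v v' τ) : Rel J Γ pc e e' τ := by
  induction h with
  | var h k => exact .var h k
  | loc h k => exact .loc (hl _ _ _ h) k
  | hi h k => exact .hi (hh _ _ _ h) k
  | tt k => exact .tt k
  | ff k => exact .ff k
  | unit k => exact .unit k
  | lam h k i => exact .lam i k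
  | app h1 h2 h3 h4 k i1 i2 => exact .app i1 i2 h3 h4 k
  | pair h1 h2 k i1 i2 => exact .pair i1 i2 k
  | fst h1 h2 k i => exact .fst i h2 k
  | snd h1 h2 k i => exact .snd i h2 k
  | inl h k i => exact .inl i k
  | inr h k i => exact .inr i k
  | case h1 h2 h3 h4 k i1 i2 i3 => exact .case i1 i2 i3 h4 k
  | new h1 h2 k i => exact .new i h2 k
  | deref h1 h2 h3 k i => exact .deref i h2 h3 k
  | assign h1 h2 h3 k i1 i2 => exact .assign i1 i2 h3 k

theorem Rel.swap (h : Rel I Γ pc e e' τ)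
    (hl : ∀ n n' τ, I.loc n n' τ → J.loc n' n τ)
    (hh : ∀ v v' τ, I.hi v v' τ → J.hi v' v τ) : Rel J Γ pc e' e τ := by
  induction h with
  | var h k => exact .var h k
  | loc h k => exact .loc (hl _ _ _ h) k
  | hi h k => exact .hi (hh _ _ _ h) k
  | tt k => exact .tt k
  | ff k => exact .ff k
  | unit k => exact .unit k
  | lam h k i => exact .lam i k
  | app h1 h2 h3 h4 k i1 i2 => exact .app i1 i2 h3 h4 k
  | pair h1 h2 k i1 i2 => exact .pair i1 i2 k
  | fst h1 h2 k i => exact .fst i h2 k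
  | snd h1 h2 k i => exact .snd i h2 k
  | inl h k i => exact .inl i k
  | inr h k i => exact .inr i k
  | case h1 h2 h3 h4 k i1 i2 i3 => exact .case i1 i2 i3 h4 k
  | new h1 h2 k i => exact .new i h2 k
  | deref h1 h2 h3 k i => exact .deref i h2 h3 k
  | assign h1 h2 h3 k i1 i2 => exact .assign i1 i2 h3 k

/-- The left-hand expression alone is well typed. -/
theorem Rel.left (h : Rel I Γ pc e e' τ)
    (hl : ∀ n n' τ, I.loc n n' τ → J.loc n n τ)
    (hh : ∀ v v' τ, I.hi v v' τ → Rel J [] ⊤ v v τ) : Rel J Γ pc e e τ := by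
  induction h with
  | var h k => exact .var h k
  | loc h k => exact .loc (hl _ _ _ h) k
  | hi h k => exact (((hh _ _ _ h).sub k).anti le_top).weaken
  | tt k => exact .tt k
  | ff k => exact .ff k
  | unit k => exact .unit k
  | lam h k i => exact .lam i k
  | app h1 h2 h3 h4 k i1 i2 => exact .app i1 i2 h3 h4 k
  | pair h1 h2 k i1 i2 => exact .pair i1 i2 k
  | fst h1 h2 k i => exact .fst i h2 k
  | snd h1 h2 k i => exact .snd i h2 k
  | inl h k i => exact .inl i k
  | inr h k i => exact .inr i k
  | case h1 h2 h3 h4 k i1 i2 i3 => exact .case i1 i2 i3 h4 k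
  | new h1 h2 k i => exact .new i h2 k
  | deref h1 h2 h3 k i => exact .deref i h2 h3 k
  | assign h1 h2 h3 k i1 i2 => exact .assign i1 i2 h3 k

/-- Every FG-typed expression is related to itself, whatever the interpretation. -/
theorem Rel.of_typed (h : FGTyped Γ pc e τ) : Rel I Γ pc e e τ := by
  induction h with
  | var h => exact .var h (sub_refl _)
  | tt => exact .tt (sub_refl _)
  | ff => exact .ff (sub_refl _)
  | unit => exact .unit (sub_refl _)
  | lam h i => exact .lam i (sub_refl _)
  | app h1 h2 h3 h4 i1 i2 => exact .app i1 i2 h3 h4 (sub_refl _)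
  | pair h1 h2 i1 i2 => exact .pair i1 i2 (sub_refl _)
  | fst h1 h2 i => exact .fst i h2 (sub_refl _)
  | snd h1 h2 i => exact .snd i h2 (sub_refl _)
  | inl h i => exact .inl i (sub_refl _)
  | inr h i => exact .inr i (sub_refl _)
  | case h1 h2 h3 h4 i1 i2 i3 => exact .case i1 i2 i3 h4 (sub_refl _)
  | new h1 h2 i => exact .new i h2 (sub_refl _)
  | deref h1 h2 h3 i => exact .deref i h2 h3 (sub_refl _)
  | assign h1 h2 h3 i1 i2 => exact .assign i1 i2 h3 (sub_refl _)
  | sub h s q i => exact (i.sub s).anti q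

/-! ### Closed expressions and substitution -/

/-- Closedness, expressed by what it is used for: shifting and substitution act trivially. -/
def Closed (e : Exp) : Prop := (∀ c, e.shift c = e) ∧ ∀ w k, e.subst w k = e

/-- The outright related values are closed. -/
def Interp.Good (I : Interp L) : Prop := ∀ v v' τ, I.hi v v' τ → Closed v ∧ Closed v'

theorem Rel.closed_aux (hI : I.Good) (h : Rel I Γ pc e e' τ) :
    ∀ c, Γ.length ≤ c → e.shift c = e ∧ ∀ w, e.subst w c = e := by
  induction h with
  | @var _ n _ _ _ h k =>
    intro c hc
    have := (List.getElem?_eq_some_iff.1 h).1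
    have h1 : n < c := by omega
    have h2 : n ≠ c := by omega
    have h3 : ¬ c < n := by omega
    simp [Exp.shift, Exp.subst, h1, h2, h3]
  | hi h k => exact fun c _ => ⟨(hI _ _ _ h).1.1 c, fun w => (hI _ _ _ h).1.2 w c⟩
  | lam h k i =>
    intro c hc
    have := i (c + 1) (by simpa using hc)
    simp [Exp.shift, Exp.subst, this]
  | case h1 h2 h3 h4 k i1 i2 i3 =>
    intro c hc
    have a := i1 c hc
    have b := i2 (c + 1) (by simpa using hc)
    have d := i3 (c + 1) (by simpa using hc)
    simp [Exp.shift, Exp.subst, a, b, d]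
  | _ => intro c hc; simp_all [Exp.shift, Exp.subst]

theorem Rel.closed_left (hI : I.Good) (h : Rel I [] pc e e' τ) : Closed e :=
  ⟨fun c => (h.closed_aux hI c (Nat.zero_le _)).1,
    fun w k => (h.closed_aux hI k (Nat.zero_le _)).2 w⟩

theorem Rel.closed_right (hI : I.Good) (h : Rel I [] pc e e' τ) : Closed e' :=
  Rel.closed_left (I := ⟨fun n n' => I.loc n' n, fun v v' => I.hi v' v⟩)
    (fun _ _ _ h => (hI _ _ _ h).symm) (h.swap (fun _ _ _ h => h) (fun _ _ _ h => h))

/-- Substitution of related closed values for the outermost variable of the context. -/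
theorem Rel.subst_aux (hI : I.Good) {τx : FGTy L} (hv : Rel I [] ⊤ v v' τx)
    (h : Rel I Γ pc e e' τ) : ∀ Γ1, Γ = Γ1 ++ [τx] →
      Rel I Γ1 pc (e.subst v Γ1.length) (e'.subst v' Γ1.length) τ := by
  have c1 := (hv.closed_left hI).1 0
  have c2 := (hv.closed_right hI).1 0
  induction h with
  | @var _ n _ _ _ h k =>
    rintro Γ1 rfl
    have hn := (List.getElem?_eq_some_iff.1 h).1
    simp only [List.length_append, List.length_singleton] at hn
    rcases Nat.lt_or_ge n Γ1.length with hlt | hge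
    · have h2 : n ≠ Γ1.length := by omega
      have h3 : ¬ Γ1.length < n := by omega
      simp only [Exp.subst, h2, h3, if_false]
      rw [List.getElem?_append_left hlt] at h
      exact .var h k
    · obtain rfl : n = Γ1.length := by omega
      simp only [List.getElem?_concat_length, Option.some.injEq] at h
      subst h
      simp only [Exp.subst, if_true]
      exact ((hv.sub k).anti le_top).weaken
  | loc h k => exact fun _ _ => .loc h k
  | hi h k =>
    intro Γ1 _
    rw [(hI _ _ _ h).1.2, (hI _ _ _ h).2.2]
    exact .hi h k
  | tt k => exact fun _ _ => .tt k
  | ff k => exact fun _ _ => .ff k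
  | unit k => exact fun _ _ => .unit k
  | lam h k i =>
    rintro Γ1 rfl
    simp only [Exp.subst, c1, c2]
    exact .lam (i (_ :: Γ1) rfl) k
  | app h1 h2 h3 h4 k i1 i2 => exact fun Γ1 q => .app (i1 Γ1 q) (i2 Γ1 q) h3 h4 k
  | pair h1 h2 k i1 i2 => exact fun Γ1 q => .pair (i1 Γ1 q) (i2 Γ1 q) k
  | fst h1 h2 k i => exact fun Γ1 q => .fst (i Γ1 q) h2 k
  | snd h1 h2 k i => exact fun Γ1 q => .snd (i Γ1 q) h2 k
  | inl h k i => exact fun Γ1 q => .inl (i Γ1 q) k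
  | inr h k i => exact fun Γ1 q => .inr (i Γ1 q) k
  | case h1 h2 h3 h4 k i1 i2 i3 =>
    rintro Γ1 rfl
    simp only [Exp.subst, c1, c2]
    exact .case (i1 Γ1 rfl) (i2 (_ :: Γ1) rfl) (i3 (_ :: Γ1) rfl) h4 k
  | new h1 h2 k i => exact fun Γ1 q => .new (i Γ1 q) h2 k
  | deref h1 h2 h3 k i => exact fun Γ1 q => .deref (i Γ1 q) h2 h3 k
  | assign h1 h2 h3 k i1 i2 => exact fun Γ1 q => .assign (i1 Γ1 q) (i2 Γ1 q) h3 k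

theorem Rel.subst (hI : I.Good) {τx : FGTy L} (h : Rel I [τx] pc e e' τ)
    (hv : Rel I [] ⊤ v v' τx) : Rel I [] pc (e.subst v 0) (e'.subst v' 0) τ :=
  Rel.subst_aux hI hv h [] rfl

/-- Closed values related at a type. -/
def VRel (I : Interp L) (v v' : Exp) (τ : FGTy L) : Prop :=
  FGVal v ∧ FGVal v' ∧ Rel I [] ⊤ v v' τ

theorem VRel.sub (h : VRel I v v' τ) (s : FGSub τ τ') : VRel I v v' τ' :=
  ⟨h.1, h.2.1, h.2.2.sub s⟩

/-- Values evaluate to themselves. -/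
theorem val_eval (hv : FGVal v) : ∀ {h h' w}, FGEval h v h' w → h' = h ∧ w = v := by
  induction hv with
  | pair _ _ i1 i2 =>
    intro h h' w k
    cases k with
    | pair a b =>
      obtain ⟨rfl, rfl⟩ := i1 a
      obtain ⟨rfl, rfl⟩ := i2 b
      exact ⟨rfl, rfl⟩
  | inl _ i =>
    intro h h' w k
    cases k with
    | inl a =>
      obtain ⟨rfl, rfl⟩ := i a
      exact ⟨rfl, rfl⟩
  | inr _ i =>
    intro h h' w k
    cases k with
    | inr a =>
      obtain ⟨rfl, rfl⟩ := i a
      exact ⟨rfl, rfl⟩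
  | _ => intro h h' w k; cases k; exact ⟨rfl, rfl⟩

/-! ### A single run: preservation and confinement -/

/-- The interpretation under which relational typing of `e` with itself is ordinary typing of a
single expression under the store typing `S`. -/
def un (S : List (FGTy L)) : Interp L :=
  ⟨fun n n' τ => n = n' ∧ S[n]? = some τ, fun _ _ _ => False⟩

theorem un_good (S : List (FGTy L)) : (un S).Good := fun _ _ _ h => h.elim

/-- `v` is a closed value of type `τ` under the store typing `S`. -/
abbrev VT (S : List (FGTy L)) (v : Exp) (τ : FGTy L) : Prop := VRel (un S) v v τ

/-- The heap `h` is well typed by the store typing `S`. -/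
def HT (S : List (FGTy L)) (h : Heap) : Prop :=
  S.length = h.length ∧ ∀ (n : ℕ) τ x, S[n]? = some τ → h[n]? = some x → VT S x τ

theorem prefix_get {α : Type} {S S' : List α} (p : S <+: S') {n : ℕ} {a : α}
    (h : S[n]? = some a) : S'[n]? = some a := by
  obtain ⟨t, rfl⟩ := p
  rw [List.getElem?_append_left (List.getElem?_eq_some_iff.1 h).1]
  exact h

variable {S S' S'' : List (FGTy L)} {h h' h'' : Heap}

theorem un_mono (p : S <+: S') (k : Rel (un S) Γ pc e e' τ) : Rel (un S') Γ pc e e' τ :=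
  k.map (fun _ _ _ q => ⟨q.1, prefix_get p q.2⟩) (fun _ _ _ q => q)

theorem VT.mono (p : S <+: S') (k : VT S v τ) : VT S' v τ := ⟨k.1, k.2.1, un_mono p k.2.2⟩

theorem HT.get (H : HT S h) {n : ℕ} (hs : S[n]? = some τ) :
    ∃ x, h[n]? = some x ∧ VT S x τ := by
  have hn : n < h.length := H.1 ▸ (List.getElem?_eq_some_iff.1 hs).1
  exact ⟨h[n], List.getElem?_eq_getElem hn, H.2 n τ _ hs (List.getElem?_eq_getElem hn)⟩

theorem HT.set (H : HT S h) {n : ℕ} (hs : S[n]? = some τ) (hv : VT S v τ) :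
    HT S (h.set n v) := by
  refine ⟨by simpa using H.1, fun m τ' x h1 h2 => ?_⟩
  by_cases hm : n = m
  · subst hm
    rw [hs] at h1
    cases h1
    rw [List.getElem?_set_self (H.1 ▸ (List.getElem?_eq_some_iff.1 hs).1)] at h2
    cases h2
    exact hv
  · rw [List.getElem?_set_ne hm] at h2
    exact H.2 m τ' x h1 h2

theorem get_append_cases {α : Type} {l : List α} {a b : α} {n : ℕ}
    (h : (l ++ [a])[n]? = some b) : l[n]? = some b ∨ (n = l.length ∧ a = b) := by
  rcases Nat.lt_or_ge n l.length with hlt | hge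
  · rw [List.getElem?_append_left hlt] at h
    exact .inl h
  · have hn := (List.getElem?_eq_some_iff.1 h).1
    simp only [List.length_append, List.length_singleton] at hn
    obtain rfl : n = l.length := by omega
    simp only [List.getElem?_concat_length, Option.some.injEq] at h
    exact .inr ⟨rfl, h⟩

theorem get_lt {α : Type} {l : List α} {a : α} {n : ℕ} (h : l[n]? = some a) : n < l.length :=
  (List.getElem?_eq_some_iff.1 h).1

theorem HT.snoc (H : HT S h) (hv : VT S v τ) : HT (S ++ [τ]) (h ++ [v]) := by
  refine ⟨by simpa using H.1, fun m τ' x h1 h2 => VT.mono (List.prefix_append _ _) ?_⟩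
  rcases get_append_cases h1 with h1 | ⟨rfl, rfl⟩
  · rcases get_append_cases h2 with h2 | ⟨rfl, rfl⟩
    · exact H.2 _ _ _ h1 h2
    · have := get_lt h1
      rw [H.1] at this
      omega
  · rw [H.1, List.getElem?_concat_length] at h2
    cases h2
    exact hv

/-- The heap locations typed by `S` whose label is not above `pc` are left alone. -/
def Conf (S : List (FGTy L)) (pc : L) (h h' : Heap) : Prop :=
  ∀ (n : ℕ) (τ : FGTy L), S[n]? = some τ → ¬ pc ≤ τ.lab → h'[n]? = h[n]?

theorem Conf.refl : Conf S pc h h := fun _ _ _ _ => rfl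

theorem Conf.trans (p : S <+: S') (a : Conf S pc h h') (b : Conf S' pc' h' h'') (q : pc ≤ pc') :
    Conf S pc h h'' := fun n τ hs hl =>
  (b n τ (prefix_get p hs) fun w => hl (q.trans w)).trans (a n τ hs hl)

/-- Type preservation together with confinement: an expression typed at `pc` writes only to
locations whose content is labeled above `pc`. -/
theorem preservation (E : FGEval h e h' v) : ∀ {S : List (FGTy L)} {pc τ}, HT S h →
    Rel (un S) [] pc e e τ → ∃ S', S <+: S' ∧ HT S' h' ∧ VT S' v τ ∧ Conf S pc h h' := by
  induction E with
  | lam => exact fun H R => ⟨_, List.prefix_rfl, H, ⟨.lam, .lam, R.val_pc .lam _⟩, Conf.refl⟩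
  | tt => exact fun H R => ⟨_, List.prefix_rfl, H, ⟨.tt, .tt, R.val_pc .tt _⟩, Conf.refl⟩
  | ff => exact fun H R => ⟨_, List.prefix_rfl, H, ⟨.ff, .ff, R.val_pc .ff _⟩, Conf.refl⟩
  | unit => exact fun H R => ⟨_, List.prefix_rfl, H, ⟨.unit, .unit, R.val_pc .unit _⟩, Conf.refl⟩
  | loc => exact fun H R => ⟨_, List.prefix_rfl, H, ⟨.loc, .loc, R.val_pc .loc _⟩, Conf.refl⟩
  | app _ _ _ i1 i2 i3 =>
    intro S pc τ H R
    cases R with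
    | hi h _ => exact h.elim
    | app R1 R2 q1 q2 s =>
      obtain ⟨S1, p1, H1, V1, C1⟩ := i1 H R1
      obtain ⟨S2, p2, H2, V2, C2⟩ := i2 H1 (un_mono p1 R2)
      cases V1.2.2 with
      | hi h _ => exact h.elim
      | lam B t =>
        cases t with
        | fn t1 t2 t3 t4 =>
          obtain ⟨S3, p3, H3, V3, C3⟩ :=
            i3 H2 ((un_mono p2 B).subst (un_good _) (V2.2.2.sub t1))
          exact ⟨S3, (p1.trans p2).trans p3, H3, V3.sub (sub_trans t3 s),
            Conf.trans (p1.trans p2) (Conf.trans p1 C1 C2 le_rfl) C3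
              ((le_sup_right.trans q1).trans t2)⟩
  | pair _ _ i1 i2 =>
    intro S pc τ H R
    cases R with
    | hi h _ => exact h.elim
    | pair R1 R2 s =>
      obtain ⟨S1, p1, H1, V1, C1⟩ := i1 H R1
      obtain ⟨S2, p2, H2, V2, C2⟩ := i2 H1 (un_mono p1 R2)
      have V1' := V1.mono p2
      exact ⟨S2, p1.trans p2, H2, ⟨.pair V1.1 V2.1, .pair V1.1 V2.1, .pair V1'.2.2 V2.2.2 s⟩,
        Conf.trans p1 C1 C2 le_rfl⟩
  | fst _ i =>
    intro S pc τ H R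
    cases R with
    | hi h _ => exact h.elim
    | fst R1 q s =>
      obtain ⟨S1, p1, H1, ⟨V, _, V1⟩, C1⟩ := i H R1
      cases V with
      | pair a b =>
        cases V1 with
        | hi h _ => exact h.elim
        | pair A B t =>
          cases t with
          | prod t1 t2 t3 => exact ⟨S1, p1, H1, ⟨a, a, A.sub (sub_trans t1 s)⟩, C1⟩
  | snd _ i =>
    intro S pc τ H R
    cases R with
    | hi h _ => exact h.elim
    | snd R1 q s =>
      obtain ⟨S1, p1, H1, ⟨V, _, V1⟩, C1⟩ := i H R1
      cases V with
      | pair a b =>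
        cases V1 with
        | hi h _ => exact h.elim
        | pair A B t =>
          cases t with
          | prod t1 t2 t3 => exact ⟨S1, p1, H1, ⟨b, b, B.sub (sub_trans t2 s)⟩, C1⟩
  | inl _ i =>
    intro S pc τ H R
    cases R with
    | hi h _ => exact h.elim
    | inl R1 s =>
      obtain ⟨S1, p1, H1, V1, C1⟩ := i H R1
      exact ⟨S1, p1, H1, ⟨.inl V1.1, .inl V1.1, .inl V1.2.2 s⟩, C1⟩
  | inr _ i =>
    intro S pc τ H R
    cases R with
    | hi h _ => exact h.elim
    | inr R1 s =>
      obtain ⟨S1, p1, H1, V1, C1⟩ := i H R1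
      exact ⟨S1, p1, H1, ⟨.inr V1.1, .inr V1.1, .inr V1.2.2 s⟩, C1⟩
  | caseL _ _ i1 i2 =>
    intro S pc τ H R
    cases R with
    | hi h _ => exact h.elim
    | case R1 R2 R3 q s =>
      obtain ⟨S1, p1, H1, V1, C1⟩ := i1 H R1
      cases V1.2.2 with
      | hi h _ => exact h.elim
      | inl A t =>
        cases t with
        | sum t1 t2 t3 =>
          obtain ⟨S2, p2, H2, V2, C2⟩ := i2 H1 ((un_mono p1 R2).subst (un_good _) (A.sub t1))
          exact ⟨S2, p1.trans p2, H2, V2.sub s, Conf.trans p1 C1 C2 le_sup_left⟩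
  | caseR _ _ i1 i2 =>
    intro S pc τ H R
    cases R with
    | hi h _ => exact h.elim
    | case R1 R2 R3 q s =>
      obtain ⟨S1, p1, H1, V1, C1⟩ := i1 H R1
      cases V1.2.2 with
      | hi h _ => exact h.elim
      | inr A t =>
        cases t with
        | sum t1 t2 t3 =>
          obtain ⟨S2, p2, H2, V2, C2⟩ := i2 H1 ((un_mono p1 R3).subst (un_good _) (A.sub t2))
          exact ⟨S2, p1.trans p2, H2, V2.sub s, Conf.trans p1 C1 C2 le_sup_left⟩
  | new _ i =>
    intro S pc τ H R
    cases R with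
    | hi h _ => exact h.elim
    | @new _ _ _ _ τ0 _ R1 q s =>
      obtain ⟨S1, p1, H1, V1, C1⟩ := i H R1
      refine ⟨S1 ++ [τ0], p1.trans (List.prefix_append _ _), H1.snoc V1,
        ⟨.loc, .loc, .loc ⟨rfl, ?_⟩ s⟩, fun n τ hs hl => ?_⟩
      · rw [← H1.1, List.getElem?_concat_length]
      · rw [List.getElem?_append_left (H1.1 ▸ get_lt (prefix_get p1 hs))]
        exact C1 n τ hs hl
  | deref _ g i =>
    intro S pc τ H R
    cases R with
    | hi h _ => exact h.elim
    | deref R1 q1 q2 s =>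
      obtain ⟨S1, p1, H1, V1, C1⟩ := i H R1
      cases V1.2.2 with
      | hi h _ => exact h.elim
      | loc A t =>
        cases t with
        | ref t => exact ⟨S1, p1, H1, (H1.2 _ _ _ A.2 g).sub (sub_trans q1 s), C1⟩
  | assign _ _ i1 i2 =>
    intro S pc τ H R
    cases R with
    | hi h _ => exact h.elim
    | assign R1 R2 q s =>
      obtain ⟨S1, p1, H1, V1, C1⟩ := i1 H R1
      obtain ⟨S2, p2, H2, V2, C2⟩ := i2 H1 (un_mono p1 R2)
      cases V1.2.2 with
      | hi h _ => exact h.elim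
      | loc A t =>
        cases t with
        | ref t =>
          refine ⟨S2, p1.trans p2, H2.set (prefix_get p2 A.2) V2, ⟨.unit, .unit, .unit s⟩,
            fun m τ' hs hl => ?_⟩
          rw [List.getElem?_set_ne]
          · exact Conf.trans p1 C1 C2 le_rfl m τ' hs hl
          · rintro rfl
            have := (prefix_get p1 hs).symm.trans A.2
            cases this
            exact hl (le_sup_left.trans q)

/-! ### Two runs -/

/-- A possible world for two runs: their store typings, and the pairs of locations that were
allocated in lockstep. -/
structure World (L : Type) where
  /-- Store typing of the left run. -/
  S1 : List (FGTy L)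
  /-- Store typing of the right run. -/
  S2 : List (FGTy L)
  /-- Corresponding locations. -/
  β : ℕ → ℕ → Prop

/-- Indistinguishability for an observer at level `o`: corresponding locations are related, and so
are any two well-typed values of a type whose label is not below `o`. -/
def World.interp (W : World L) (o : L) : Interp L :=
  ⟨fun n n' τ => W.β n n' ∧ W.S1[n]? = some τ ∧ W.S2[n']? = some τ,
    fun v v' τ => ¬ τ.lab ≤ o ∧ VT W.S1 v τ ∧ VT W.S2 v' τ⟩

/-- World extension. -/
def World.Ext (W W' : World L) : Prop :=
  W.S1 <+: W'.S1 ∧ W.S2 <+: W'.S2 ∧ ∀ n n', W.β n n' → W'.β n n'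

theorem World.Ext.refl {W : World L} : W.Ext W := ⟨List.prefix_rfl, List.prefix_rfl, fun _ _ h => h⟩

theorem World.Ext.trans {W W' W'' : World L} (a : W.Ext W') (b : W'.Ext W'') : W.Ext W'' :=
  ⟨a.1.trans b.1, a.2.1.trans b.2.1, fun n n' h => b.2.2 n n' (a.2.2 n n' h)⟩

variable {W W' W'' : World L} {o : L} {h1 h2 h1' h2' : Heap} {e1 e2 v1 v2 : Exp}

theorem interp_good : (W.interp o).Good := fun _ _ _ h =>
  ⟨h.2.1.2.2.closed_left (un_good _), h.2.2.2.2.closed_left (un_good _)⟩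

theorem Rel.mono (p : W.Ext W') (k : Rel (W.interp o) Γ pc e e' τ) :
    Rel (W'.interp o) Γ pc e e' τ :=
  k.map (fun _ _ _ q => ⟨p.2.2 _ _ q.1, prefix_get p.1 q.2.1, prefix_get p.2.1 q.2.2⟩)
    (fun _ _ _ q => ⟨q.1, q.2.1.mono p.1, q.2.2.mono p.2.1⟩)

theorem VRel.mono (p : W.Ext W') (k : VRel (W.interp o) v v' τ) :
    VRel (W'.interp o) v v' τ := ⟨k.1, k.2.1, k.2.2.mono p⟩

theorem Rel.proj1 (k : Rel (W.interp o) Γ pc e e' τ) : Rel (un W.S1) Γ pc e e τ :=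
  k.left (fun _ _ _ q => ⟨rfl, q.2.1⟩) (fun _ _ _ q => q.2.1.2.2)

theorem Rel.proj2 (k : Rel (W.interp o) Γ pc e e' τ) : Rel (un W.S2) Γ pc e' e' τ :=
  Rel.left (I := ⟨fun n n' => (W.interp o).loc n' n, fun v v' => (W.interp o).hi v' v⟩)
    (k.swap (fun _ _ _ q => q) (fun _ _ _ q => q))
    (fun _ _ _ q => ⟨rfl, q.2.2⟩) (fun _ _ _ q => q.2.2.2.2)

theorem VRel.proj1 (k : VRel (W.interp o) v v' τ) : VT W.S1 v τ := ⟨k.1, k.1, k.2.2.proj1⟩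

theorem VRel.proj2 (k : VRel (W.interp o) v v' τ) : VT W.S2 v' τ := ⟨k.2.1, k.2.1, k.2.2.proj2⟩

theorem VRel.of_high (hl : ¬ τ.lab ≤ o) (a : VT W.S1 v τ) (b : VT W.S2 v' τ) :
    VRel (W.interp o) v v' τ := ⟨a.1, b.1, .hi ⟨hl, a, b⟩ (sub_refl _)⟩

/-- Indistinguishable heaps: both well typed, with indistinguishable contents at corresponding
locations. For contents above the observer's level this is implied by well-typedness. -/
structure HeapRel (o : L) (W : World L) (h1 h2 : Heap) : Prop where
  t1 : HT W.S1 h1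
  t2 : HT W.S2 h2
  inj : ∀ n n' m m', W.β n n' → W.β m m' → (n = m ↔ n' = m')
  typ : ∀ n n', W.β n n' → ∃ τ, W.S1[n]? = some τ ∧ W.S2[n']? = some τ
  low : ∀ n n' τ x x', W.β n n' → W.S1[n]? = some τ → h1[n]? = some x → h2[n']? = some x' →
    τ.lab ≤ o → VRel (W.interp o) x x' τ

/-- A pair of runs at pc-labels not below the observer's level cannot be observed. -/
theorem HeapRel.high_step (H : HeapRel o W h1 h2) {S1 S2 : List (FGTy L)} {pc1 pc2 : L}
    (p1 : W.S1 <+: S1) (p2 : W.S2 <+: S2) (H1 : HT S1 h1') (H2 : HT S2 h2')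
    (C1 : Conf W.S1 pc1 h1 h1') (C2 : Conf W.S2 pc2 h2 h2') (q1 : ¬ pc1 ≤ o) (q2 : ¬ pc2 ≤ o) :
    W.Ext ⟨S1, S2, W.β⟩ ∧ HeapRel o ⟨S1, S2, W.β⟩ h1' h2' := by
  have ext : W.Ext ⟨S1, S2, W.β⟩ := ⟨p1, p2, fun _ _ h => h⟩
  refine ⟨ext, H1, H2, H.inj, fun n n' b => ?_, fun n n' τ x x' b hs g1 g2 hl => ?_⟩
  · obtain ⟨τ, a, b⟩ := H.typ n n' b
    exact ⟨τ, prefix_get p1 a, prefix_get p2 b⟩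
  · obtain ⟨τ0, a, c⟩ := H.typ n n' b
    have := (prefix_get p1 a).symm.trans hs
    cases this
    rw [C1 n τ a fun w => q1 (w.trans hl)] at g1
    rw [C2 n' τ c fun w => q2 (w.trans hl)] at g2
    exact (H.low n n' τ x x' b a g1 g2 hl).mono ext

theorem HeapRel.set (H : HeapRel o W h1 h2) {n n' : ℕ} (s1 : W.S1[n]? = some τ)
    (s2 : W.S2[n']? = some τ) (hb : W.β n n' ∨ ¬ τ.lab ≤ o) (hv : VRel (W.interp o) v v' τ) :
    HeapRel o W (h1.set n v) (h2.set n' v') := by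
  refine ⟨H.t1.set s1 hv.proj1, H.t2.set s2 hv.proj2, H.inj, H.typ,
    fun m m' τ' x x' b hs g1 g2 hl => ?_⟩
  by_cases hm : n = m ∧ n' = m'
  · obtain ⟨rfl, rfl⟩ := hm
    rw [List.getElem?_set_self (H.t1.1 ▸ get_lt s1)] at g1
    rw [List.getElem?_set_self (H.t2.1 ▸ get_lt s2)] at g2
    rw [s1] at hs
    cases g1; cases g2; cases hs
    exact hv
  · -- Either both writes miss the pair, or the content written is high while the pair's is low.
    have key : n ≠ m ∧ n' ≠ m' := by
      rcases hb with hb | hb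
      · have := H.inj _ _ _ _ hb b
        tauto
      · obtain ⟨τ0, a, c⟩ := H.typ m m' b
        rw [hs] at a
        cases a
        constructor
        · rintro rfl
          rw [s1] at hs
          cases hs
          exact hb hl
        · rintro rfl
          rw [s2] at c
          cases c
          exact hb hl
    rw [List.getElem?_set_ne key.1] at g1
    rw [List.getElem?_set_ne key.2] at g2
    exact H.low m m' τ' x x' b hs g1 g2 hl

theorem HeapRel.snoc (H : HeapRel o W h1 h2) (hv : VRel (W.interp o) v v' τ) :
    ∃ W', W.Ext W' ∧ HeapRel o W' (h1 ++ [v]) (h2 ++ [v']) ∧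
      (W'.interp o).loc h1.length h2.length τ := by
  let W' : World L := ⟨W.S1 ++ [τ], W.S2 ++ [τ],
    fun n n' => W.β n n' ∨ (n = h1.length ∧ n' = h2.length)⟩
  have ext : W.Ext W' := ⟨List.prefix_append _ _, List.prefix_append _ _, fun _ _ h => .inl h⟩
  have new1 : (W.S1 ++ [τ])[h1.length]? = some τ := by rw [← H.t1.1, List.getElem?_concat_length]
  have new2 : (W.S2 ++ [τ])[h2.length]? = some τ := by rw [← H.t2.1, List.getElem?_concat_length]
  have old : ∀ n n', W.β n n' → n < h1.length ∧ n' < h2.length := by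
    intro n n' b
    obtain ⟨τ, a, c⟩ := H.typ n n' b
    exact ⟨H.t1.1 ▸ get_lt a, H.t2.1 ▸ get_lt c⟩
  refine ⟨W', ext, ⟨H.t1.snoc hv.proj1, H.t2.snoc hv.proj2, ?_, ?_, ?_⟩,
    .inr ⟨rfl, rfl⟩, new1, new2⟩
  · rintro n n' m m' (a | ⟨rfl, rfl⟩) (b | ⟨rfl, rfl⟩)
    · exact H.inj _ _ _ _ a b
    · have := old _ _ a
      omega
    · have := old _ _ b
      omega
    · simp
  · rintro n n' (b | ⟨rfl, rfl⟩)
    · obtain ⟨τ', a, c⟩ := H.typ n n' b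
      exact ⟨τ', prefix_get ext.1 a, prefix_get ext.2.1 c⟩
    · exact ⟨τ, new1, new2⟩
  · rintro n n' τ' x x' (b | ⟨rfl, rfl⟩) hs g1 g2 hl
    · have hlt := old _ _ b
      rw [List.getElem?_append_left hlt.1] at g1
      rw [List.getElem?_append_left hlt.2] at g2
      obtain ⟨τ0, a, c⟩ := H.typ n n' b
      have := (prefix_get ext.1 a).symm.trans hs
      cases this
      exact (H.low n n' τ' x x' b a g1 g2 hl).mono ext
    · have := new1.symm.trans hs
      cases this
      rw [List.getElem?_concat_length] at g1 g2
      cases g1; cases g2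
      exact hv.mono ext

/-- Unobservable continuations: when each run continues with an expression typed at a pc-label
not below the observer's level, and the result type is not below it either, the outcomes are
indistinguishable. -/
theorem high_runs (H : HeapRel o W h1 h2) {pc1 pc2 : L} (R1 : Rel (un W.S1) [] pc1 e1 e1 τ)
    (R2 : Rel (un W.S2) [] pc2 e2 e2 τ) (q1 : ¬ pc1 ≤ o) (q2 : ¬ pc2 ≤ o) (hl : ¬ τ.lab ≤ o)
    (E1 : FGEval h1 e1 h1' v1) (E2 : FGEval h2 e2 h2' v2) :
    ∃ W', W.Ext W' ∧ HeapRel o W' h1' h2' ∧ VRel (W'.interp o) v1 v2 τ := by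
  obtain ⟨S1, p1, H1, V1, C1⟩ := preservation E1 H.t1 R1
  obtain ⟨S2, p2, H2, V2, C2⟩ := preservation E2 H.t2 R2
  obtain ⟨x, K⟩ := H.high_step p1 p2 H1 H2 C1 C2 q1 q2
  exact ⟨_, x, K, VRel.of_high hl V1 V2⟩

/-- Values related outright evaluate to themselves, so they stay related. -/
theorem hi_runs (H : HeapRel o W h1 h2) {τ0 : FGTy L} (k : (W.interp o).hi e1 e2 τ0)
    (s : FGSub τ0 τ) (E1 : FGEval h1 e1 h1' v1) (E2 : FGEval h2 e2 h2' v2) :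
    ∃ W', W.Ext W' ∧ HeapRel o W' h1' h2' ∧ VRel (W'.interp o) v1 v2 τ := by
  obtain ⟨rfl, rfl⟩ := val_eval k.2.1.1 E1
  obtain ⟨rfl, rfl⟩ := val_eval k.2.2.1 E2
  exact ⟨W, World.Ext.refl, H, k.2.1.1, k.2.2.1, .hi k s⟩

/-- Inversion for a typed abstraction, with its body already instantiated at a typed argument. -/
theorem VT.lam_inv {τ1 τ2 : FGTy L} {le l : L} {b : Exp} (k : VT S (.lam b) τ)
    (s : FGSub τ (.fn τ1 le τ2 l)) (ha : Rel (un S) [] ⊤ v v τ1) :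
    Rel (un S) [] le (b.subst v 0) (b.subst v 0) τ2 := by
  cases k.2.2.sub s with
  | hi h _ => exact h.elim
  | lam B t =>
    cases t with
    | fn t1 t2 t3 t4 => exact ((B.subst (un_good _) (ha.sub t1)).sub t3).anti t2

theorem VT.inl_inv {τ1 τ2 : FGTy L} {l : L} (k : VT S (.inl v) τ)
    (s : FGSub τ (.sum τ1 τ2 l)) : Rel (un S) [] ⊤ v v τ1 := by
  cases k.2.2.sub s with
  | hi h _ => exact h.elim
  | inl B t => cases t with | sum t1 t2 t3 => exact B.sub t1

theorem VT.inr_inv {τ1 τ2 : FGTy L} {l : L} (k : VT S (.inr v) τ)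
    (s : FGSub τ (.sum τ1 τ2 l)) : Rel (un S) [] ⊤ v v τ2 := by
  cases k.2.2.sub s with
  | hi h _ => exact h.elim
  | inr B t => cases t with | sum t1 t2 t3 => exact B.sub t2

theorem VT.pair_inv {τ1 τ2 : FGTy L} {l : L} (k : VT S (.pair v v') τ)
    (s : FGSub τ (.prod τ1 τ2 l)) : VT S v τ1 ∧ VT S v' τ2 := by
  obtain ⟨K, _, k⟩ := k
  cases K with
  | pair a b =>
    cases k.sub s with
    | hi h _ => exact h.elim
    | pair A B t =>
      cases t with | prod t1 t2 t3 => exact ⟨⟨a, a, A.sub t1⟩, ⟨b, b, B.sub t2⟩⟩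

theorem VT.loc_inv {n : ℕ} {τ1 : FGTy L} {l : L} (k : VT S (.loc n) τ)
    (s : FGSub τ (.ref τ1 l)) : S[n]? = some τ1 := by
  cases k.2.2.sub s with
  | hi h _ => exact h.elim
  | loc A t => cases t with | ref _ => exact A.2

/-- Evaluation preserves indistinguishability. The two runs stay in lockstep until they eliminate
a pair of values that are related only because their type is secret; from there `high_runs`
takes over. -/
theorem fundamental (E1 : FGEval h1 e1 h1' v1) :
    ∀ {W : World L} {pc τ} {e2 h2 h2' v2}, HeapRel o W h1 h2 → Rel (W.interp o) [] pc e1 e2 τ →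
      FGEval h2 e2 h2' v2 →
      ∃ W', W.Ext W' ∧ HeapRel o W' h1' h2' ∧ VRel (W'.interp o) v1 v2 τ := by
  induction E1 with
  | lam =>
    intro W pc τ e2 h2 h2' v2 H R E2
    cases R with
    | hi k s => exact hi_runs H k s .lam E2
    | lam B s => cases E2; exact ⟨W, World.Ext.refl, H, .lam, .lam, .lam B s⟩
  | tt =>
    intro W pc τ e2 h2 h2' v2 H R E2
    cases R with
    | hi k s => exact hi_runs H k s .tt E2
    | tt s => cases E2; exact ⟨W, World.Ext.refl, H, .tt, .tt, .tt s⟩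
  | ff =>
    intro W pc τ e2 h2 h2' v2 H R E2
    cases R with
    | hi k s => exact hi_runs H k s .ff E2
    | ff s => cases E2; exact ⟨W, World.Ext.refl, H, .ff, .ff, .ff s⟩
  | unit =>
    intro W pc τ e2 h2 h2' v2 H R E2
    cases R with
    | hi k s => exact hi_runs H k s .unit E2
    | unit s => cases E2; exact ⟨W, World.Ext.refl, H, .unit, .unit, .unit s⟩
  | loc =>
    intro W pc τ e2 h2 h2' v2 H R E2
    cases R with
    | hi k s => exact hi_runs H k s .loc E2
    | loc B s => cases E2; exact ⟨W, World.Ext.refl, H, .loc, .loc, .loc B s⟩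
  | app A1 A2 A3 i1 i2 i3 =>
    intro W pc τ e2 h2 h2' v2 H R E2
    cases R with
    | hi k s => exact hi_runs H k s (.app A1 A2 A3) E2
    | app R1 R2 q1 q2 s =>
      cases E2 with
      | app B1 B2 B3 =>
        obtain ⟨W1, p1, H1, V1⟩ := i1 H R1 B1
        obtain ⟨W2, p2, H2, V2⟩ := i2 H1 (R2.mono p1) B2
        cases (V1.mono p2).2.2 with
        | lam B t =>
          cases t with
          | fn t1 t2 t3 t4 =>
            obtain ⟨W3, p3, H3, V3⟩ := i3 H2 (B.subst interp_good (V2.2.2.sub t1)) B3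
            exact ⟨W3, (p1.trans p2).trans p3, H3, V3.sub (sub_trans t3 s)⟩
        | hi k t =>
          -- A secret function: its label bounds both the effects of the body and the result.
          have hl := fun w => k.1 ((sub_lab t).trans w)
          obtain ⟨W3, p3, H3, V3⟩ := high_runs H2 (k.2.1.lam_inv t V2.proj1.2.2)
            (k.2.2.lam_inv t V2.proj2.2.2) (fun w => hl ((le_sup_left.trans q1).trans w))
            (fun w => hl ((le_sup_left.trans q1).trans w)) (fun w => hl (q2.trans w)) A3 B3
          exact ⟨W3, (p1.trans p2).trans p3, H3, V3.sub s⟩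
  | pair A1 A2 i1 i2 =>
    intro W pc τ e2 h2 h2' v2 H R E2
    cases R with
    | hi k s => exact hi_runs H k s (.pair A1 A2) E2
    | pair R1 R2 s =>
      cases E2 with
      | pair B1 B2 =>
        obtain ⟨W1, p1, H1, V1⟩ := i1 H R1 B1
        obtain ⟨W2, p2, H2, V2⟩ := i2 H1 (R2.mono p1) B2
        exact ⟨W2, p1.trans p2, H2, .pair V1.1 V2.1, .pair V1.2.1 V2.2.1,
          .pair (V1.mono p2).2.2 V2.2.2 s⟩
  | fst A1 i1 =>
    intro W pc τ e2 h2 h2' v2 H R E2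
    cases R with
    | hi k s => exact hi_runs H k s (.fst A1) E2
    | fst R1 q s =>
      cases E2 with
      | fst B1 =>
        obtain ⟨W1, p1, H1, ⟨a, b, V1⟩⟩ := i1 H R1 B1
        cases V1 with
        | pair X Y t =>
          cases a; cases b
          cases t with
          | prod t1 t2 t3 => exact ⟨W1, p1, H1, ‹_›, ‹_›, X.sub (sub_trans t1 s)⟩
        | hi k t =>
          exact ⟨W1, p1, H1, (VRel.of_high (fun w => k.1 (((sub_lab t).trans q).trans w))
            (k.2.1.pair_inv t).1 (k.2.2.pair_inv t).1).sub s⟩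
  | snd A1 i1 =>
    intro W pc τ e2 h2 h2' v2 H R E2
    cases R with
    | hi k s => exact hi_runs H k s (.snd A1) E2
    | snd R1 q s =>
      cases E2 with
      | snd B1 =>
        obtain ⟨W1, p1, H1, ⟨a, b, V1⟩⟩ := i1 H R1 B1
        cases V1 with
        | pair X Y t =>
          cases a; cases b
          cases t with
          | prod t1 t2 t3 => exact ⟨W1, p1, H1, ‹_›, ‹_›, Y.sub (sub_trans t2 s)⟩
        | hi k t =>
          exact ⟨W1, p1, H1, (VRel.of_high (fun w => k.1 (((sub_lab t).trans q).trans w))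
            (k.2.1.pair_inv t).2 (k.2.2.pair_inv t).2).sub s⟩
  | inl A1 i1 =>
    intro W pc τ e2 h2 h2' v2 H R E2
    cases R with
    | hi k s => exact hi_runs H k s (.inl A1) E2
    | inl R1 s =>
      cases E2 with
      | inl B1 =>
        obtain ⟨W1, p1, H1, V1⟩ := i1 H R1 B1
        exact ⟨W1, p1, H1, .inl V1.1, .inl V1.2.1, .inl V1.2.2 s⟩
  | inr A1 i1 =>
    intro W pc τ e2 h2 h2' v2 H R E2
    cases R with
    | hi k s => exact hi_runs H k s (.inr A1) E2
    | inr R1 s =>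
      cases E2 with
      | inr B1 =>
        obtain ⟨W1, p1, H1, V1⟩ := i1 H R1 B1
        exact ⟨W1, p1, H1, .inr V1.1, .inr V1.2.1, .inr V1.2.2 s⟩
  | caseL A1 A2 i1 i2 =>
    intro W pc τ e2 h2 h2' v2 H R E2
    cases R with
    | hi k s => exact hi_runs H k s (.caseL A1 A2) E2
    | case R1 R2 R3 q s =>
      cases E2 with
      | caseL B1 B2 =>
        obtain ⟨W1, p1, H1, V1⟩ := i1 H R1 B1
        cases V1.2.2 with
        | inl X t =>
          cases t with
          | sum t1 t2 t3 =>
            obtain ⟨W2, p2, H2, V2⟩ := i2 H1 ((R2.mono p1).subst interp_good (X.sub t1)) B2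
            exact ⟨W2, p1.trans p2, H2, V2.sub s⟩
        | hi k t =>
          have hl := fun w => k.1 ((sub_lab t).trans w)
          obtain ⟨W2, p2, H2, V2⟩ := high_runs H1
            ((R2.mono p1).proj1.subst (un_good _) (k.2.1.inl_inv t))
            ((R2.mono p1).proj2.subst (un_good _) (k.2.2.inl_inv t))
            (fun w => hl (le_sup_right.trans w)) (fun w => hl (le_sup_right.trans w))
            (fun w => hl (q.trans w)) A2 B2
          exact ⟨W2, p1.trans p2, H2, V2.sub s⟩
      | caseR B1 B2 =>
        obtain ⟨W1, p1, H1, V1⟩ := i1 H R1 B1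
        cases V1.2.2 with
        | hi k t =>
          have hl := fun w => k.1 ((sub_lab t).trans w)
          obtain ⟨W2, p2, H2, V2⟩ := high_runs H1
            ((R2.mono p1).proj1.subst (un_good _) (k.2.1.inl_inv t))
            ((R3.mono p1).proj2.subst (un_good _) (k.2.2.inr_inv t))
            (fun w => hl (le_sup_right.trans w)) (fun w => hl (le_sup_right.trans w))
            (fun w => hl (q.trans w)) A2 B2
          exact ⟨W2, p1.trans p2, H2, V2.sub s⟩
  | caseR A1 A2 i1 i2 =>
    intro W pc τ e2 h2 h2' v2 H R E2
    cases R with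
    | hi k s => exact hi_runs H k s (.caseR A1 A2) E2
    | case R1 R2 R3 q s =>
      cases E2 with
      | caseR B1 B2 =>
        obtain ⟨W1, p1, H1, V1⟩ := i1 H R1 B1
        cases V1.2.2 with
        | inr X t =>
          cases t with
          | sum t1 t2 t3 =>
            obtain ⟨W2, p2, H2, V2⟩ := i2 H1 ((R3.mono p1).subst interp_good (X.sub t2)) B2
            exact ⟨W2, p1.trans p2, H2, V2.sub s⟩
        | hi k t =>
          have hl := fun w => k.1 ((sub_lab t).trans w)
          obtain ⟨W2, p2, H2, V2⟩ := high_runs H1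
            ((R3.mono p1).proj1.subst (un_good _) (k.2.1.inr_inv t))
            ((R3.mono p1).proj2.subst (un_good _) (k.2.2.inr_inv t))
            (fun w => hl (le_sup_right.trans w)) (fun w => hl (le_sup_right.trans w))
            (fun w => hl (q.trans w)) A2 B2
          exact ⟨W2, p1.trans p2, H2, V2.sub s⟩
      | caseL B1 B2 =>
        obtain ⟨W1, p1, H1, V1⟩ := i1 H R1 B1
        cases V1.2.2 with
        | hi k t =>
          have hl := fun w => k.1 ((sub_lab t).trans w)
          obtain ⟨W2, p2, H2, V2⟩ := high_runs H1
            ((R3.mono p1).proj1.subst (un_good _) (k.2.1.inr_inv t))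
            ((R2.mono p1).proj2.subst (un_good _) (k.2.2.inl_inv t))
            (fun w => hl (le_sup_right.trans w)) (fun w => hl (le_sup_right.trans w))
            (fun w => hl (q.trans w)) A2 B2
          exact ⟨W2, p1.trans p2, H2, V2.sub s⟩
  | new A1 i1 =>
    intro W pc τ e2 h2 h2' v2 H R E2
    cases R with
    | hi k s => exact hi_runs H k s (.new A1) E2
    | new R1 q s =>
      cases E2 with
      | new B1 =>
        obtain ⟨W1, p1, H1, V1⟩ := i1 H R1 B1
        obtain ⟨W2, p2, H2, X⟩ := H1.snoc V1
        exact ⟨W2, p1.trans p2, H2, .loc, .loc, .loc X s⟩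
  | deref A1 g1 i1 =>
    intro W pc τ e2 h2 h2' v2 H R E2
    cases R with
    | hi k s => exact hi_runs H k s (.deref A1 g1) E2
    | @deref _ _ _ _ τ0 l τ1 _ R1 q1 q2 s =>
      cases E2 with
      | deref B1 g2 =>
        obtain ⟨W1, p1, H1, V1⟩ := i1 H R1 B1
        refine ⟨W1, p1, H1, VRel.sub ?_ s⟩
        have x1 := H1.t1.2 _ _ _ (V1.proj1.loc_inv (sub_refl _)) g1
        have x2 := H1.t2.2 _ _ _ (V1.proj2.loc_inv (sub_refl _)) g2
        cases V1.2.2 with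
        | loc X t =>
          cases t with
          | ref t =>
            by_cases hl : τ0.lab ≤ o
            · exact (H1.low _ _ _ _ _ X.1 X.2.1 g1 g2 hl).sub q1
            · exact (VRel.of_high hl x1 x2).sub q1
        | hi k t =>
          exact VRel.of_high (fun w => k.1 (((sub_lab t).trans q2).trans w)) (x1.sub q1) (x2.sub q1)
  | assign A1 A2 i1 i2 =>
    intro W pc τ e2 h2 h2' v2 H R E2
    cases R with
    | hi k s => exact hi_runs H k s (.assign A1 A2) E2
    | assign R1 R2 q s =>
      cases E2 with
      | assign B1 B2 =>
        obtain ⟨W1, p1, H1, V1⟩ := i1 H R1 B1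
        obtain ⟨W2, p2, H2, V2⟩ := i2 H1 (R2.mono p1) B2
        have V1' := V1.mono p2
        refine ⟨W2, p1.trans p2, H2.set (V1'.proj1.loc_inv (sub_refl _))
          (V1'.proj2.loc_inv (sub_refl _)) ?_ V2, .unit, .unit, .unit s⟩
        cases V1'.2.2 with
        | loc X t => exact .inl X.1
        | hi k t => exact .inr fun w => k.1 (((sub_lab t).trans (le_sup_right.trans q)).trans w)

end FGNI

/-! ## STATEMENT 1: Noninterference for FG -/

open FGNI

theorem fg_noninterference
    {L : Type} [Lattice L] [BoundedOrder L]
    (li l pc : L) (τA : FGTy L) (hlab : τA.lab = li) (e v1 v2 : Exp)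
    (hflow : ¬ li ≤ l)
    (hty : FGTyped [τA] pc e (FGTy.bool l))
    (hv1 : FGVal v1) (hv1ty : FGTyped ([] : List (FGTy L)) ⊤ v1 τA)
    (hv2 : FGVal v2) (hv2ty : FGTyped ([] : List (FGTy L)) ⊤ v2 τA)
    (h1 h2 : Heap) (r1 r2 : Exp)
    (hrun1 : FGEval [] (e.subst v1 0) h1 r1)
    (hrun2 : FGEval [] (e.subst v2 0) h2 r2) :
    r1 = r2 := by
  subst hlab
  let W : World L := ⟨[], [], fun _ _ => False⟩
  have H : HeapRel l W [] [] :=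
    ⟨⟨rfl, by simp [W]⟩, ⟨rfl, by simp [W]⟩, fun _ _ _ _ h => h.elim, fun _ _ h => h.elim,
      fun _ _ _ _ _ h => h.elim⟩
  have hv : VRel (W.interp l) v1 v2 τA :=
    VRel.of_high hflow ⟨hv1, hv1, .of_typed hv1ty⟩ ⟨hv2, hv2, .of_typed hv2ty⟩
  obtain ⟨W', _, _, a, b, R⟩ :=
    fundamental hrun1 H ((Rel.of_typed hty).subst interp_good hv.2.2) hrun2
  cases R with
  | tt _ => rfl
  | ff _ => rfl
  | hi k s => exact absurd (sub_lab s) k.1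
  | unit s => cases s
  | loc _ s => cases s
  | lam _ s => cases s
  | pair _ _ s => cases s
  | inl _ s => cases s
  | inr _ s => cases s
  | _ => cases a
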